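/- Let π be the group with presentation ⟨t, a, b | t⁻¹ a t = a², t⁻¹ b² t = b⟩ and let φ : π → ℤ be the homomorphism determined by φ(t) = 1, φ(a) = φ(b) = 0. Then rg(π,φ) = 0, yet there is no group B generated by finitely many elements, injective endomorphism f : B → B, and isomorphism Θ from the ascending HNN extension ⟨B, s | s⁻¹ b s = f(b) for all b ∈ B⟩ to π with φ(Θ(s)) = 1 and φ(Θ(b)) = 0 for all b ∈ B, and likewise no such data with the descending HNN extension ⟨B, s | s b s⁻¹ = f(b) for all b ∈ B⟩ in place of the ascending one. -/

import Mathlib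

/-!
The rank gradient vanishes because every `G_i` with `i ≥ 1` has index `i` and is generated by the
three elements `tⁱ, a, b`. Write `a_k = tᵏ a t⁻ᵏ` and `b_k = tᵏ b t⁻ᵏ`; then `a_{k-1} = a_k²` and
`b_{k+1} = b_k²`, so `⟨tⁱ, a, b⟩` contains `a_k` for `k ≤ 0` and `b_k` for `k ≥ 0`, and conjugating
by powers of `tⁱ` gives all the others. Hence `⟨tⁱ, a, b⟩` is normal (`threeGen_normal`) and equals
`G_i` (`modKer_eq`).

The two HNN statements use affine representations `π → ℚ ⋊ ℤ` (`toAff`). Killing `a` and sending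
`b` to a unit translation makes conjugation by `t` act on `ℚ` as doubling; killing `b` and sending
`a` to a unit translation makes it act as halving. If `π` were an ascending HNN extension of a
finitely generated `B ≤ ker φ`, then under the first representation `B` would map to a finitely
generated group of translations, and `s⁻¹ B s ⊆ B` makes this group closed under halving. A finitely
generated subgroup of `ℚ` closed under halving is zero (`eq_one_of_halving`), so the image of `π`
would be the cyclic group generated by the image of `s`, which meets the translations trivially; but
`b` maps to a nontrivial translation (`ker_trivial_of_halving`). The descending case is the same
with the second representation and `a` in place of `b`.
-/

/-- The rank of a group: the minimal number of generators. -/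
noncomputable def grank (G : Type*) [Group G] : ℕ :=
  sInf {n : ℕ | ∃ S : Finset G, S.card = n ∧ Subgroup.closure (S : Set G) = ⊤}

/-- `modKer φ i` is the subgroup `G_i = Ker(G → ℤ → ℤ/iℤ)`. -/
def modKer {G : Type*} [Group G] (φ : G →* Multiplicative ℤ) (i : ℕ) : Subgroup G :=
  ((AddMonoidHom.toMultiplicative (Int.castAddHom (ZMod i))).comp φ).ker

/-- The rank gradient of `(G, φ)`:
`liminf_{i → ∞} rk(G_i) / [G : G_i]`. -/
noncomputable def rg {G : Type*} [Group G] (φ : G →* Multiplicative ℤ) : ℝ :=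
  Filter.liminf
    (fun i : ℕ => (grank (modKer φ i) : ℝ) / ((modKer φ i).index : ℝ)) Filter.atTop

/-- The relators `t⁻¹ a t a⁻²` and `t⁻¹ b² t b⁻¹` of the presentation
`⟨t, a, b | t⁻¹ a t = a², t⁻¹ b² t = b⟩`, with `t, a, b` the generators `0, 1, 2`. -/
def piRels : Set (FreeGroup (Fin 3)) :=
  { (FreeGroup.of 0)⁻¹ * FreeGroup.of 1 * FreeGroup.of 0 *
      (FreeGroup.of 1 * FreeGroup.of 1)⁻¹,
    (FreeGroup.of 0)⁻¹ * (FreeGroup.of 2 * FreeGroup.of 2) * FreeGroup.of 0 *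
      (FreeGroup.of 2)⁻¹ }

/-- The group `π = ⟨t, a, b | t⁻¹ a t = a², t⁻¹ b² t = b⟩`. -/
abbrev piGroup : Type := PresentedGroup piRels

/-- The ascending HNN extension `⟨B, s | s⁻¹ b s = f(b) for all b ∈ B⟩` of a group `B`
along an injective endomorphism `f : B → B`.  (In Mathlib's `HNNExtension G A B φ` the
stable letter satisfies `t * of a * t⁻¹ = of (φ a)` for `a ∈ A`; taking `A = f.range`,
`B = ⊤` and `φ (f b) = b` this says exactly `t⁻¹ * of b * t = of (f b)`.) -/
noncomputable def AscendingHNN {B : Type*} [Group B] (f : B →* B)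
    (hf : Function.Injective f) : Type _ :=
  HNNExtension B f.range ⊤ ((MulEquiv.symm (MonoidHom.ofInjective hf)).trans
    (Subgroup.topEquiv (G := B)).symm)

noncomputable instance {B : Type*} [Group B] (f : B →* B) (hf : Function.Injective f) :
    Group (AscendingHNN f hf) := by
  delta AscendingHNN; infer_instance

/-- The canonical map `B → ⟨B, s | s⁻¹ b s = f(b)⟩`. -/
noncomputable def AscendingHNN.of {B : Type*} [Group B] (f : B →* B)
    (hf : Function.Injective f) : B →* AscendingHNN f hf :=
  HNNExtension.of

/-- The stable letter of `⟨B, s | s⁻¹ b s = f(b)⟩`. -/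
noncomputable def AscendingHNN.t {B : Type*} [Group B] (f : B →* B)
    (hf : Function.Injective f) : AscendingHNN f hf :=
  HNNExtension.t

/-- The descending HNN extension `⟨B, s | s b s⁻¹ = f(b) for all b ∈ B⟩` of a group `B`
along an injective endomorphism `f : B → B`.  (Taking `A = ⊤`, `B = f.range` and
`φ b = f b` in Mathlib's `HNNExtension`, the relation reads `t * of b * t⁻¹ = of (f b)`.) -/
noncomputable def DescendingHNN {B : Type*} [Group B] (f : B →* B)
    (hf : Function.Injective f) : Type _ :=
  HNNExtension B ⊤ f.range
    ((Subgroup.topEquiv (G := B)).trans (MonoidHom.ofInjective hf))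

noncomputable instance {B : Type*} [Group B] (f : B →* B) (hf : Function.Injective f) :
    Group (DescendingHNN f hf) := by
  delta DescendingHNN; infer_instance

/-- The canonical map `B → ⟨B, s | s b s⁻¹ = f(b)⟩`. -/
noncomputable def DescendingHNN.of {B : Type*} [Group B] (f : B →* B)
    (hf : Function.Injective f) : B →* DescendingHNN f hf :=
  HNNExtension.of

/-- The stable letter of `⟨B, s | s b s⁻¹ = f(b)⟩`. -/
noncomputable def DescendingHNN.t {B : Type*} [Group B] (f : B →* B)
    (hf : Function.Injective f) : DescendingHNN f hf :=
  HNNExtension.t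

/-! ### Affine groups over the rationals -/

/-- Multiplication by powers of `u` as an action of `ℤ` on `ℚ`. -/
noncomputable def dilation (u : ℚˣ) : Multiplicative ℤ →* MulAut (Multiplicative ℚ) :=
  zpowersHom _ (AddEquiv.toMultiplicative (AddAut.mulLeft u))

/-- The affine group `ℚ ⋊ ℤ` in which `1 ∈ ℤ` acts on `ℚ` as multiplication by `u`. -/
abbrev Aff (u : ℚˣ) : Type := Multiplicative ℚ ⋊[dilation u] Multiplicative ℤ

lemma dilation_one (u : ℚˣ) (x : Multiplicative ℚ) :
    dilation u (Multiplicative.ofAdd 1) x = Multiplicative.ofAdd ((u : ℚ) * x.toAdd) := by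
  simp [dilation]
  rfl

/-- The stable letter of `Aff u` acts on translations as multiplication by `u`. -/
lemma Aff.semiconj (u : ℚˣ) (σ x : Aff u) (hσ : σ.right = Multiplicative.ofAdd 1)
    (hx : x.right = 1) :
    σ * x * σ⁻¹ = SemidirectProduct.inl (Multiplicative.ofAdd ((u : ℚ) * x.left.toAdd)) := by
  rw [mul_inv_eq_iff_eq_mul]
  ext
  · simp [SemidirectProduct.mul_left, hσ, dilation_one, mul_comm]
  · simp [SemidirectProduct.mul_right, hx]

/-- A finitely generated subgroup of `ℚ` has a common denominator, so a homomorphism to `ℚ`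
whose image is closed under halving is trivial. -/
lemma eq_one_of_halving {B : Type*} [Group B] (hB : Group.FG B)
    (l : B →* Multiplicative ℚ) (h : ∀ b, ∃ c, (l b).toAdd = 2 * (l c).toAdd) (b : B) :
    l b = 1 := by
  obtain ⟨S, hS⟩ := Group.fg_def.1 hB
  have hint : ∃ N : ℤ, N ≠ 0 ∧ ∀ b, ∃ z : ℤ, (N : ℚ) * (l b).toAdd = z := by
    refine ⟨∏ s ∈ S, ((l s).toAdd.den : ℤ), ?_, fun b => ?_⟩
    · exact Finset.prod_ne_zero_iff.2 fun s _ => by exact_mod_cast (l s).toAdd.den_nz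
    · have hb : b ∈ Subgroup.closure (S : Set B) := hS ▸ Subgroup.mem_top b
      induction hb using Subgroup.closure_induction with
      | mem x hx =>
        obtain ⟨k, hk⟩ := Finset.dvd_prod_of_mem (fun s => ((l s).toAdd.den : ℤ)) hx
        refine ⟨k * (l x).toAdd.num, ?_⟩
        rw [hk]
        push_cast
        rw [mul_comm (((l x).toAdd.den : ℚ)), mul_assoc, mul_comm ((l x).toAdd.den : ℚ),
          Rat.mul_den_eq_num]
      | one => exact ⟨0, by simp⟩
      | mul x y _ _ hx hy =>
        obtain ⟨p, hp⟩ := hx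
        obtain ⟨q, hq⟩ := hy
        exact ⟨p + q, by rw [map_mul, toAdd_mul, mul_add, hp, hq]; push_cast; rfl⟩
      | inv x _ hx =>
        obtain ⟨p, hp⟩ := hx
        exact ⟨-p, by rw [map_inv, toAdd_inv, mul_neg, hp]; push_cast; rfl⟩
  obtain ⟨N, hN, hint⟩ := hint
  have hpow : ∀ k : ℕ, ∃ c, (l b).toAdd = 2 ^ k * (l c).toAdd := by
    intro k
    induction k with
    | zero => exact ⟨b, by simp⟩
    | succ k ih =>
      obtain ⟨c, hc⟩ := ih
      obtain ⟨d, hd⟩ := h c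
      exact ⟨d, by rw [hc, hd]; ring⟩
  obtain ⟨z, hz⟩ := hint b
  have hz0 : z = 0 := by
    obtain ⟨c, hc⟩ := hpow z.natAbs
    obtain ⟨w, hw⟩ := hint c
    have hzw : z = 2 ^ z.natAbs * w := by
      have : (z : ℚ) = 2 ^ z.natAbs * w := by rw [← hz, ← hw, hc]; ring
      exact_mod_cast this
    -- `2 ^ |z| > |z|`, so divisibility by `2 ^ |z|` forces `z = 0`
    refine Int.eq_zero_of_dvd_of_natAbs_lt_natAbs (Dvd.intro _ hzw.symm) ?_
    rw [Int.natAbs_pow]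
    exact Nat.lt_two_pow_self
  rw [hz0, Int.cast_zero, mul_eq_zero] at hz
  have hb0 := hz.resolve_left (by exact_mod_cast hN)
  exact hb0

/-! ### Relations and affine representations of `π` -/

lemma pi_rel_a : (PresentedGroup.of 0 : piGroup)⁻¹ * PresentedGroup.of 1 * PresentedGroup.of 0 =
    PresentedGroup.of 1 ^ 2 := by
  have := PresentedGroup.one_of_mem (rels := piRels) (Or.inl rfl)
  simp only [map_mul, map_inv] at this
  rw [pow_two]
  exact mul_inv_eq_one.1 this

lemma pi_rel_b : (PresentedGroup.of 0 : piGroup) * PresentedGroup.of 2 * (PresentedGroup.of 0)⁻¹ =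
    PresentedGroup.of 2 ^ 2 := by
  have := PresentedGroup.one_of_mem (rels := piRels) (Or.inr rfl)
  simp only [map_mul, map_inv] at this
  have h := mul_inv_eq_one.1 this
  change (PresentedGroup.of 0 : piGroup)⁻¹ * (PresentedGroup.of 2 * PresentedGroup.of 2) *
    PresentedGroup.of 0 = PresentedGroup.of 2 at h
  rw [mul_inv_eq_iff_eq_mul, pow_two]
  rw [mul_assoc, inv_mul_eq_iff_eq_mul] at h
  exact h.symm

/-- The homomorphism `π → Aff u` sending `t` to the stable letter, `a` to translation by `x` and
`b` to translation by `y`; the relators hold exactly when `x = 2ux` and `2y = uy`. -/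
noncomputable def toAff (u : ℚˣ) (x y : ℚ) (hx : x = u * (x + x)) (hy : y + y = u * y) :
    piGroup →* Aff u :=
  PresentedGroup.toGroup (rels := piRels)
    (f := ![SemidirectProduct.inr (Multiplicative.ofAdd 1),
      SemidirectProduct.inl (Multiplicative.ofAdd x),
      SemidirectProduct.inl (Multiplicative.ofAdd y)]) (by
    rintro r (rfl | rfl)
    · simp only [map_mul, map_inv, FreeGroup.lift_apply_of, mul_inv_eq_one]
      rw [mul_assoc, inv_mul_eq_iff_eq_mul]
      ext
      · simp [SemidirectProduct.mul_left, dilation_one]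
        exact hx
      · simp [SemidirectProduct.mul_right]
    · simp only [map_mul, map_inv, FreeGroup.lift_apply_of, mul_inv_eq_one]
      rw [mul_assoc, inv_mul_eq_iff_eq_mul]
      ext
      · simp [SemidirectProduct.mul_left, dilation_one]
        exact hy
      · simp [SemidirectProduct.mul_right])

/-- The projection of `Aff u` to `ℤ` restricts along `toAff` to the given `φ`. -/
lemma toAff_right (φ : piGroup →* Multiplicative ℤ)
    (hφt : φ (PresentedGroup.of 0) = Multiplicative.ofAdd 1)
    (hφa : φ (PresentedGroup.of 1) = 1)
    (hφb : φ (PresentedGroup.of 2) = 1)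
    (u : ℚˣ) (x y : ℚ) (hx : x = u * (x + x)) (hy : y + y = u * y) (g : piGroup) :
    (toAff u x y hx hy g).right = φ g := by
  have : SemidirectProduct.rightHom.comp (toAff u x y hx hy) = φ := by
    apply PresentedGroup.ext
    intro i
    fin_cases i <;> simp [toAff, hφt, hφa, hφb]
  exact DFunLike.congr_fun this g

/-! ### The obstruction to finitely generated HNN bases -/

/-- Suppose `E` is generated by a finitely generated group `B` and a letter `s` and maps onto `π`
with `B` going to `ker φ` and `s` to `φ = 1`. If the images in `ℚ` of elements of `B` can be halved
within the image of `B`, then the whole of `ker φ` is killed in `Aff u`, because `B` is and the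
image of `π` is then the cyclic group generated by that of `s`. -/
lemma ker_trivial_of_halving {u : ℚˣ} (φ : piGroup →* Multiplicative ℤ) (ρ : piGroup →* Aff u)
    (hρ : ∀ g, (ρ g).right = φ g) {B E : Type} [Group B] [Group E] (hB : Group.FG B)
    (ι : B →* E) (s : E)
    (hE : ∀ F G : E →* Aff u, F.comp ι = G.comp ι → F s = G s → F = G)
    (Θ : E ≃* piGroup) (hs : φ (Θ s) = Multiplicative.ofAdd 1) (hι : ∀ b, φ (Θ (ι b)) = 1)
    (h : ∀ b, ∃ c, (ρ (Θ (ι b))).left.toAdd = 2 * (ρ (Θ (ι c))).left.toAdd)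
    (g : piGroup) (hg : φ g = 1) : ρ g = 1 := by
  let l : B →* Multiplicative ℚ :=
    { toFun := fun b => (ρ (Θ (ι b))).left
      map_one' := by simp
      map_mul' := fun b c => by
        simp [SemidirectProduct.mul_left, hρ, hι] }
  have hl : ∀ b, ρ (Θ (ι b)) = 1 := fun b => by
    ext
    · exact congrArg Multiplicative.toAdd (eq_one_of_halving hB l h b)
    · simp [hρ, hι]
  have hcyc : ρ.comp Θ.toMonoidHom =
      (zpowersHom _ (ρ (Θ s))).comp (φ.comp Θ.toMonoidHom) := by
    apply hE
    · ext1 b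
      simp [hl, hι]
    · simp [hs]
  have := DFunLike.congr_fun hcyc (Θ.symm g)
  simpa [hg] using this

/-! ### The kernels `G_i` are generated by three elements -/

/-- Iterating `t⁻¹ a t = a²`. -/
lemma conj_pow_a (n : ℕ) : ((PresentedGroup.of 0 : piGroup) ^ n)⁻¹ * PresentedGroup.of 1 *
    PresentedGroup.of 0 ^ n = PresentedGroup.of 1 ^ 2 ^ n := by
  induction n with
  | zero => simp
  | succ n ih =>
    calc _ = (PresentedGroup.of 0 : piGroup)⁻¹ * (((PresentedGroup.of 0 : piGroup) ^ n)⁻¹ *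
          PresentedGroup.of 1 * PresentedGroup.of 0 ^ n) * PresentedGroup.of 0 := by
            rw [pow_succ]; group
      _ = ((PresentedGroup.of 0 : piGroup)⁻¹ * PresentedGroup.of 1 *
          ((PresentedGroup.of 0 : piGroup)⁻¹)⁻¹) ^ 2 ^ n := by rw [ih, conj_pow, inv_inv]
      _ = _ := by rw [inv_inv, pi_rel_a, ← pow_mul, pow_succ']

/-- Iterating `t b t⁻¹ = b²`. -/
lemma conj_pow_b (n : ℕ) : (PresentedGroup.of 0 : piGroup) ^ n * PresentedGroup.of 2 *
    (PresentedGroup.of 0 ^ n)⁻¹ = PresentedGroup.of 2 ^ 2 ^ n := by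
  induction n with
  | zero => simp
  | succ n ih =>
    calc _ = (PresentedGroup.of 0 : piGroup) * ((PresentedGroup.of 0 : piGroup) ^ n *
          PresentedGroup.of 2 * (PresentedGroup.of 0 ^ n)⁻¹) * (PresentedGroup.of 0)⁻¹ := by
            rw [pow_succ]; group
      _ = ((PresentedGroup.of 0 : piGroup) * PresentedGroup.of 2 *
          (PresentedGroup.of 0)⁻¹) ^ 2 ^ n := by rw [ih, conj_pow]
      _ = _ := by rw [pi_rel_b, ← pow_mul, pow_succ']

/-- The subgroup `⟨tⁱ, a, b⟩` of `π`. -/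
def threeGen (i : ℕ) : Subgroup piGroup :=
  Subgroup.closure {PresentedGroup.of 0 ^ i, PresentedGroup.of 1, PresentedGroup.of 2}

lemma t_pow_mem (i : ℕ) : PresentedGroup.of 0 ^ i ∈ threeGen i :=
  Subgroup.subset_closure (by simp)

lemma a_mem (i : ℕ) : PresentedGroup.of 1 ∈ threeGen i :=
  Subgroup.subset_closure (by simp)

lemma b_mem (i : ℕ) : PresentedGroup.of 2 ∈ threeGen i :=
  Subgroup.subset_closure (by simp)

/-- Conjugation by `t⁻¹` squares `a` and turns `b` into a `tⁱ`-conjugate of a power of `b`;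
conjugation by `t` does the same with `a` and `b` exchanged. -/
lemma threeGen_normal (j : ℕ) : (threeGen (j + 1)).Normal := by
  have ht := t_pow_mem (j + 1)
  have ha := a_mem (j + 1)
  have hb := b_mem (j + 1)
  have h1 : ∀ h ∈ threeGen (j + 1),
      PresentedGroup.of 0 * h * (PresentedGroup.of 0)⁻¹ ∈ threeGen (j + 1) := by
    have : threeGen (j + 1) ≤
        (threeGen (j + 1)).comap (MulAut.conj (PresentedGroup.of 0 : piGroup)).toMonoidHom := by
      refine (Subgroup.closure_le _).2 ?_
      rintro x (rfl | rfl | rfl)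
      · have : (PresentedGroup.of 0 : piGroup) * PresentedGroup.of 0 ^ (j + 1) *
            (PresentedGroup.of 0)⁻¹ = PresentedGroup.of 0 ^ (j + 1) := by group
        simpa [this] using ht
      · have : (PresentedGroup.of 0 : piGroup) * PresentedGroup.of 1 * (PresentedGroup.of 0)⁻¹ =
            PresentedGroup.of 0 ^ (j + 1) * PresentedGroup.of 1 ^ 2 ^ j *
              (PresentedGroup.of 0 ^ (j + 1))⁻¹ := by
          rw [← conj_pow_a, pow_succ']; group
        simpa [this] using mul_mem (mul_mem ht (pow_mem ha _)) (inv_mem ht)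
      · simpa [pi_rel_b] using pow_mem hb 2
    exact fun h hh => this hh
  have h2 : ∀ h ∈ threeGen (j + 1),
      (PresentedGroup.of 0)⁻¹ * h * PresentedGroup.of 0 ∈ threeGen (j + 1) := by
    have : threeGen (j + 1) ≤
        (threeGen (j + 1)).comap (MulAut.conj (PresentedGroup.of 0 : piGroup)⁻¹).toMonoidHom := by
      refine (Subgroup.closure_le _).2 ?_
      rintro x (rfl | rfl | rfl)
      · have : (PresentedGroup.of 0 : piGroup)⁻¹ * PresentedGroup.of 0 ^ (j + 1) *
            PresentedGroup.of 0 = PresentedGroup.of 0 ^ (j + 1) := by group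
        simpa [this] using ht
      · simpa [pi_rel_a] using pow_mem ha 2
      · have : (PresentedGroup.of 0 : piGroup)⁻¹ * PresentedGroup.of 2 * PresentedGroup.of 0 =
            (PresentedGroup.of 0 ^ (j + 1))⁻¹ * PresentedGroup.of 2 ^ 2 ^ j *
              PresentedGroup.of 0 ^ (j + 1) := by
          rw [← conj_pow_b, pow_succ]; group
        simpa [this] using mul_mem (mul_mem (inv_mem ht) (pow_mem hb _)) ht
    exact fun h hh => by simpa using this hh
  rw [← Subgroup.normalizer_eq_top_iff, eq_top_iff]
  intro g _
  refine PresentedGroup.generated_by piRels _ (fun i => ?_) g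
  fin_cases i
  · refine Subgroup.mem_normalizer_iff.2 fun h => ⟨h1 h, fun hh => ?_⟩
    have := h2 _ hh
    simpa [mul_assoc] using this
  · exact Subgroup.le_normalizer ha
  · exact Subgroup.le_normalizer hb

lemma mem_modKer (φ : piGroup →* Multiplicative ℤ) (i : ℕ) (g : piGroup) : g ∈ modKer φ i ↔ (i : ℤ) ∣ (φ g).toAdd := by
  rw [← ZMod.intCast_zmod_eq_zero_iff_dvd]
  rfl

/-- For `i = 0` both sides vanish: `ker φ` has infinite index, recorded as `0`. -/
lemma modKer_index (φ : piGroup →* Multiplicative ℤ)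
    (hφt : φ (PresentedGroup.of 0) = Multiplicative.ofAdd 1) (i : ℕ) : (modKer φ i).index = i := by
  rw [modKer, Subgroup.index_ker, MonoidHom.range_eq_top.2]
  · rw [Subgroup.card_top]
    exact Nat.card_zmod i
  · intro z
    obtain ⟨n, hn⟩ := ZMod.intCast_surjective z.toAdd
    refine ⟨PresentedGroup.of 0 ^ n, ?_⟩
    rw [← ofAdd_toAdd z, ← hn]
    simp [hφt]

/-- Modulo the normal subgroup `⟨tⁱ, a, b⟩` every `g` is `t ^ φ g`, which is trivial once `i`
divides `φ g`. -/
lemma modKer_eq (φ : piGroup →* Multiplicative ℤ)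
    (hφt : φ (PresentedGroup.of 0) = Multiplicative.ofAdd 1)
    (hφa : φ (PresentedGroup.of 1) = 1) (hφb : φ (PresentedGroup.of 2) = 1) (j : ℕ) :
    modKer φ (j + 1) = threeGen (j + 1) := by
  have := threeGen_normal j
  apply le_antisymm
  · intro g hg
    rw [mem_modKer] at hg
    obtain ⟨m, hm⟩ := hg
    have hq : QuotientGroup.mk' (threeGen (j + 1)) =
        (zpowersHom _ (QuotientGroup.mk' (threeGen (j + 1)) (PresentedGroup.of 0))).comp φ := by
      apply PresentedGroup.ext
      intro k
      fin_cases k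
      · simp [hφt]
      · simpa [hφa] using a_mem (j + 1)
      · simpa [hφb] using b_mem (j + 1)
    rw [← QuotientGroup.ker_mk' (threeGen (j + 1)), MonoidHom.mem_ker, hq]
    rw [MonoidHom.comp_apply, zpowersHom_apply, hm, zpow_mul, zpow_natCast, ← map_pow]
    have h1 : QuotientGroup.mk' (threeGen (j + 1)) (PresentedGroup.of 0 ^ (j + 1)) = 1 :=
      (QuotientGroup.eq_one_iff _).2 (t_pow_mem _)
    rw [h1, one_zpow]
  · refine (Subgroup.closure_le _).2 ?_
    rintro x (rfl | rfl | rfl) <;> simp [mem_modKer, hφt, hφa, hφb]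

lemma grank_modKer_le (φ : piGroup →* Multiplicative ℤ)
    (hφt : φ (PresentedGroup.of 0) = Multiplicative.ofAdd 1)
    (hφa : φ (PresentedGroup.of 1) = 1) (hφb : φ (PresentedGroup.of 2) = 1) (j : ℕ) :
    grank (modKer φ (j + 1)) ≤ 3 := by
  classical
  rw [modKer_eq φ hφt hφa hφb]
  let S : Finset (threeGen (j + 1)) :=
    {⟨_, t_pow_mem (j + 1)⟩, ⟨_, a_mem (j + 1)⟩, ⟨_, b_mem (j + 1)⟩}
  have hS : (S : Set (threeGen (j + 1))) = ((↑) : threeGen (j + 1) → piGroup) ⁻¹'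
      {PresentedGroup.of 0 ^ (j + 1), PresentedGroup.of 1, PresentedGroup.of 2} := by
    ext x
    simp [S, Subtype.ext_iff]
  have hcl : Subgroup.closure (S : Set (threeGen (j + 1))) = ⊤ := by
    rw [hS]
    exact Subgroup.closure_closure_coe_preimage
  have hle : grank (threeGen (j + 1)) ≤ S.card := Nat.sInf_le ⟨S, rfl, hcl⟩
  exact hle.trans Finset.card_le_three

lemma rg_eq_zero (φ : piGroup →* Multiplicative ℤ)
    (hφt : φ (PresentedGroup.of 0) = Multiplicative.ofAdd 1)
    (hφa : φ (PresentedGroup.of 1) = 1) (hφb : φ (PresentedGroup.of 2) = 1) : rg φ = 0 := by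
  apply Filter.Tendsto.liminf_eq
  refine squeeze_zero' (g := fun i : ℕ => (3 : ℝ) / i) (Filter.Eventually.of_forall fun i => by
    positivity) ?_ (tendsto_const_div_atTop_nhds_zero_nat 3)
  filter_upwards [Filter.eventually_ge_atTop 1] with i hi
  obtain ⟨j, rfl⟩ := Nat.exists_eq_add_of_le' hi
  rw [modKer_index φ hφt]
  gcongr
  exact_mod_cast grank_modKer_le φ hφt hφa hφb j

/-! ### Rank gradient zero without a finitely generated HNN base -/

/-- Let `π = ⟨t, a, b | t⁻¹ a t = a², t⁻¹ b² t = b⟩` and let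
`φ : π → ℤ` be the homomorphism with `φ(t) = 1`, `φ(a) = φ(b) = 0`.  Then
`rg(π, φ) = 0`, but `(π, φ)` is neither an ascending nor a descending HNN extension of
a finitely generated group: there is no finitely generated group `B`, injective
endomorphism `f : B → B` and isomorphism `Θ` from the ascending (resp. descending) HNN
extension of `B` along `f` to `π` with `φ(Θ(s)) = 1` and `φ(Θ(b)) = 0` for `b ∈ B`. -/
theorem piGroup_rg_zero_and_not_ascending_or_descending
    (φ : piGroup →* Multiplicative ℤ)
    (hφt : φ (PresentedGroup.of 0) = Multiplicative.ofAdd 1)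
    (hφa : φ (PresentedGroup.of 1) = 1)
    (hφb : φ (PresentedGroup.of 2) = 1) :
    rg φ = 0 ∧
    ¬ (∃ (B : Type) (_ : Group B) (_ : Group.FG B) (f : B →* B)
        (hf : Function.Injective f) (Θ : AscendingHNN f hf ≃* piGroup),
        φ (Θ (AscendingHNN.t f hf)) = Multiplicative.ofAdd 1 ∧
        ∀ b : B, φ (Θ (AscendingHNN.of f hf b)) = 1) ∧
    ¬ (∃ (B : Type) (_ : Group B) (_ : Group.FG B) (f : B →* B)
        (hf : Function.Injective f) (Θ : DescendingHNN f hf ≃* piGroup),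
        φ (Θ (DescendingHNN.t f hf)) = Multiplicative.ofAdd 1 ∧
        ∀ b : B, φ (Θ (DescendingHNN.of f hf b)) = 1) := by
  refine ⟨rg_eq_zero φ hφt hφa hφb, ?_, ?_⟩
  · rintro ⟨B, _, hB, f, hf, Θ, hs, hι⟩
    -- `a` is killed and conjugation by `t` doubles the translation part of `b`
    let u : ℚˣ := Units.mk0 2 two_ne_zero
    have hx : (0 : ℚ) = u * (0 + 0) := by simp
    have hy : (1 : ℚ) + 1 = u * 1 := by simp [u]; norm_num
    have hρ := toAff_right φ hφt hφa hφb u 0 1 hx hy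
    have key := ker_trivial_of_halving φ (toAff u 0 1 hx hy) hρ hB
      (AscendingHNN.of f hf) (AscendingHNN.t f hf)
      (fun F G h1 h2 => HNNExtension.hom_ext h1 h2) Θ hs hι (fun b => ⟨f b, ?_⟩)
      (PresentedGroup.of 2) hφb
    · have := congrArg (fun x => x.left.toAdd) key
      simp [toAff] at this
    · have hrel : AscendingHNN.t f hf * AscendingHNN.of f hf (f b) * (AscendingHNN.t f hf)⁻¹ =
          AscendingHNN.of f hf b := by
        rw [mul_inv_eq_iff_eq_mul]
        refine (HNNExtension.t_mul_of (⟨f b, b, rfl⟩ : f.range)).trans ?_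
        change HNNExtension.of ((MonoidHom.ofInjective hf).symm (MonoidHom.ofInjective hf b)) * _ = _
        rw [MulEquiv.symm_apply_apply]
        rfl
      have := Aff.semiconj u (toAff u 0 1 hx hy (Θ (AscendingHNN.t f hf)))
        (toAff u 0 1 hx hy (Θ (AscendingHNN.of f hf (f b)))) (by rw [hρ, hs]) (by rw [hρ, hι])
      rw [← map_inv, ← map_mul, ← map_mul, ← map_inv, ← map_mul, ← map_mul, hrel] at this
      rw [this]
      rfl
  · rintro ⟨B, _, hB, f, hf, Θ, hs, hι⟩
    -- `b` is killed and conjugation by `t` halves the translation part of `a`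
    let u : ℚˣ := Units.mk0 (1 / 2) (by norm_num)
    have hx : (1 : ℚ) = u * (1 + 1) := by simp [u]; norm_num
    have hy : (0 : ℚ) + 0 = u * 0 := by simp
    have hρ := toAff_right φ hφt hφa hφb u 1 0 hx hy
    have key := ker_trivial_of_halving φ (toAff u 1 0 hx hy) hρ hB
      (DescendingHNN.of f hf) (DescendingHNN.t f hf)
      (fun F G h1 h2 => HNNExtension.hom_ext h1 h2) Θ hs hι (fun b => ⟨f b, ?_⟩)
      (PresentedGroup.of 1) hφa
    · have := congrArg (fun x => x.left.toAdd) key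
      simp [toAff] at this
    · have hrel : DescendingHNN.t f hf * DescendingHNN.of f hf b * (DescendingHNN.t f hf)⁻¹ =
          DescendingHNN.of f hf (f b) := by
        rw [mul_inv_eq_iff_eq_mul]
        exact HNNExtension.t_mul_of (⟨b, trivial⟩ : (⊤ : Subgroup B))
      have := Aff.semiconj u (toAff u 1 0 hx hy (Θ (DescendingHNN.t f hf)))
        (toAff u 1 0 hx hy (Θ (DescendingHNN.of f hf b))) (by rw [hρ, hs]) (by rw [hρ, hι])
      rw [← map_inv, ← map_mul, ← map_mul, ← map_inv, ← map_mul, ← map_mul, hrel] at this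
      rw [this]
      simp [u]
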